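/- arXiv:1206.1310 — 4 statements merged into one kernel-verified Lean document; each statement's English description precedes it below -/
import Mathlib

section
/- Let E_{k-1}, E_k, E_{k+1} be finite types with positive weight functions μ_{k-1}, μ_k, μ_{k+1} (all values > 0) and parity functions sgn : E_{k-1} × E_k → ℤ, sgn : E_k × E_{k+1} → ℤ with values in {-1,0,1} satisfying the cocycle condition ∑_{e_k} sgn(e_{k-1},e_k)·sgn(e_k,e_{k+1}) = 0 for all e_{k-1}, e_{k+1}. Let D_k = (E_k → ℂ) with inner product ⟨f,g⟩_k = ∑_{e} μ_k(e) f(e) conj(g(e)) and H_k = {f : d_k f = 0 and δ_k f = 0}. Then ker(d_k) = range(d_{k-1}) ⊕ H_k as an orthogonal direct sum; consequently H_k is linearly isomorphic to the deRham cohomology space ker(d_k)/range(d_{k-1}), and dim H_k = dim ker(d_k) − dim range(d_{k-1}). -/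
/-- The deRham derivative `d` as a `ℂ`-linear map on graph forms. -/
noncomputable def dMap {A B : Type*} [Fintype A] (sgn : A → B → ℤ) :
    (A → ℂ) →ₗ[ℂ] (B → ℂ) where
  toFun f := fun b => ∑ a : A, (sgn a b : ℂ) * f a
  map_add' f g := by
    funext b
    show ∑ a : A, (sgn a b : ℂ) * (f a + g a) =
      (∑ a : A, (sgn a b : ℂ) * f a) + ∑ a : A, (sgn a b : ℂ) * g a
    rw [← Finset.sum_add_distrib]
    exact Finset.sum_congr rfl fun a _ => mul_add _ _ _
  map_smul' c f := by
    funext b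
    show ∑ a : A, (sgn a b : ℂ) * (c * f a) = c * ∑ a : A, (sgn a b : ℂ) * f a
    rw [Finset.mul_sum]
    exact Finset.sum_congr rfl fun a _ => by ring

/-- The dual deRham derivative `δ` as a `ℂ`-linear map on weighted graph forms. -/
noncomputable def deltaMap {A B : Type*} [Fintype B] (μA : A → ℝ) (μB : B → ℝ)
    (sgn : A → B → ℤ) : (B → ℂ) →ₗ[ℂ] (A → ℂ) where
  toFun f := fun a => ∑ b : B, ((μB b / μA a : ℝ) : ℂ) * (sgn a b : ℂ) * f b
  map_add' f g := by
    funext a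
    show ∑ b : B, ((μB b / μA a : ℝ) : ℂ) * (sgn a b : ℂ) * (f b + g b) =
      (∑ b : B, ((μB b / μA a : ℝ) : ℂ) * (sgn a b : ℂ) * f b) +
        ∑ b : B, ((μB b / μA a : ℝ) : ℂ) * (sgn a b : ℂ) * g b
    rw [← Finset.sum_add_distrib]
    exact Finset.sum_congr rfl fun b _ => mul_add _ _ _
  map_smul' c f := by
    funext a
    show ∑ b : B, ((μB b / μA a : ℝ) : ℂ) * (sgn a b : ℂ) * (c * f b) =
      c * ∑ b : B, ((μB b / μA a : ℝ) : ℂ) * (sgn a b : ℂ) * f b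
    rw [Finset.mul_sum]
    exact Finset.sum_congr rfl fun b _ => by ring

/-- The weighted inner product `⟨f, g⟩ = ∑_e μ(e) f(e) conj(g(e))`. -/
noncomputable def ip {A : Type*} [Fintype A] (μ : A → ℝ) (f g : A → ℂ) : ℂ :=
  ∑ a : A, (μ a : ℂ) * f a * (starRingEnd ℂ) (g a)

/-!
`δ` is the adjoint of `d`, so `ker δ_{k-1}` is the orthogonal complement of `range d_{k-1}` for the
weighted inner product on `k`-forms; in finite dimension the two are therefore complementary. The
cocycle condition gives `range d_{k-1} ≤ ker d_k`, and the modular law restricts this decomposition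
to `ker d_k`.
-/

section Complement

variable {S V : Type*} [AddCommGroup V]

/-- For a complement `K` of `R` in `V` and `R ≤ Z`, the identification of `Z ⊓ K` with `Z ⧸ R`
sending each vector to its class. The quotient is taken inside `Z`, so `R` enters through its
preimage under the inclusion of `Z`. -/
noncomputable def infEquivQuotientOfIsCompl [Ring S] [Module S V] {R K Z : Submodule S V}
    (hRK : IsCompl R K) (hRZ : R ≤ Z) : ↥(Z ⊓ K) ≃ₗ[S] ↥Z ⧸ Submodule.comap Z.subtype R :=
  have hcompl : IsCompl (Submodule.comap Z.subtype R) (Submodule.comap Z.subtype (Z ⊓ K)) := by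
    rw [Submodule.comap_inf, Submodule.comap_subtype_self, top_inf_eq]
    exact Submodule.isCompl_comap_subtype_of_isCompl_of_le hRK hRZ
  (Submodule.comapSubtypeEquivOfLe inf_le_left).symm ≪≫ₗ
    (Submodule.quotientEquivOfIsCompl _ _ hcompl).symm

theorem finrank_add_finrank_inf_of_isCompl [DivisionRing S] [Module S V]
    {R K Z : Submodule S V} [FiniteDimensional S Z] (hRK : IsCompl R K) (hRZ : R ≤ Z) :
    Module.finrank S R + Module.finrank S ↥(Z ⊓ K) = Module.finrank S Z := by
  rw [(infEquivQuotientOfIsCompl hRK hRZ).finrank_eq,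
    ← (Submodule.comapSubtypeEquivOfLe hRZ).finrank_eq, add_comm]
  exact Submodule.finrank_quotient_add_finrank _

theorem isCompl_of_mem_iff_forall_inner_eq_zero {𝕜 : Type*} [RCLike 𝕜] [Module 𝕜 V]
    (core : InnerProductSpace.Core 𝕜 V) {R K : Submodule 𝕜 V} [FiniteDimensional 𝕜 R]
    (hK : ∀ u, u ∈ K ↔ ∀ f ∈ R, core.inner u f = 0) : IsCompl R K := by
  let : NormedAddCommGroup V := core.toNormedAddCommGroup
  let : InnerProductSpace 𝕜 V := InnerProductSpace.ofCore core.toCore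
  have hKR : K = Rᗮ := by
    ext u
    rw [hK, Submodule.mem_orthogonal']
  rw [hKR]
  exact R.isCompl_orthogonal

end Complement

section InnerProduct

variable {A : Type*} [Fintype A] {μ : A → ℝ}

theorem eq_zero_of_forall_ip_eq_zero (hμ : ∀ a, μ a ≠ 0) {u : A → ℂ}
    (hu : ∀ f, ip μ f u = 0) : u = 0 := by
  classical
  funext a
  have hsingle : ip μ (Pi.single a 1) u = μ a * (starRingEnd ℂ) (u a) := by
    simp [ip, Pi.single_apply]
  simpa [hsingle, hμ a] using hu (Pi.single a 1)

theorem ip_self (f : A → ℂ) : ip μ f f = ((∑ a, μ a * Complex.normSq (f a) : ℝ) : ℂ) := by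
  simp [ip, mul_assoc, Complex.mul_conj]

/-- The weighted inner product `ip μ` on forms, for positive weights. The arguments are swapped
because Mathlib's inner products are conjugate-linear in the first argument. -/
@[reducible]
noncomputable def ipCore (hμ : ∀ a, 0 < μ a) : InnerProductSpace.Core ℂ (A → ℂ) where
  inner f g := ip μ g f
  conj_inner_symm f g := by simp [ip, mul_right_comm]
  re_inner_nonneg f := by
    rw [ip_self, RCLike.re_to_complex, Complex.ofReal_re]
    exact Finset.sum_nonneg fun a _ => mul_nonneg (hμ a).le (Complex.normSq_nonneg _)
  add_left f g h := by simp [ip, mul_add, Finset.sum_add_distrib]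
  smul_left f g c := by simp [ip, Finset.mul_sum, mul_left_comm]
  definite f hf := by
    rw [ip_self, Complex.ofReal_eq_zero, Finset.sum_eq_zero_iff_of_nonneg
      fun a _ => mul_nonneg (hμ a).le (Complex.normSq_nonneg _)] at hf
    funext a
    simpa [(hμ a).ne'] using hf a (Finset.mem_univ a)

end InnerProduct

section Derivative

variable {A B C : Type*}

theorem dMap_apply [Fintype A] (sgn : A → B → ℤ) (f : A → ℂ) (b : B) :
    dMap sgn f b = ∑ a, (sgn a b : ℂ) * f a :=
  rfl

theorem deltaMap_apply [Fintype B] (μA : A → ℝ) (μB : B → ℝ) (sgn : A → B → ℤ) (f : B → ℂ)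
    (a : A) : deltaMap μA μB sgn f a = ∑ b, ((μB b / μA a : ℝ) : ℂ) * (sgn a b : ℂ) * f b :=
  rfl

/-- The space `H_k` of harmonic `k`-forms, the forms killed both by `d_k` (given by `sgn₂`) and by
`δ_{k-1}` (given by `sgn₁` and the weights). -/
noncomputable def harmonicForms [Fintype B] (μA : A → ℝ) (μB : B → ℝ)
    (sgn₁ : A → B → ℤ) (sgn₂ : B → C → ℤ) : Submodule ℂ (B → ℂ) :=
  LinearMap.ker (dMap sgn₂) ⊓ LinearMap.ker (deltaMap μA μB sgn₁)

variable [Fintype A] [Fintype B] {μA : A → ℝ} {μB : B → ℝ}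

theorem dMap_comp_dMap (sgn₁ : A → B → ℤ) (sgn₂ : B → C → ℤ) :
    dMap sgn₂ ∘ₗ dMap sgn₁ = dMap fun a c => ∑ b, sgn₁ a b * sgn₂ b c := by
  refine LinearMap.ext fun f => funext fun c => ?_
  simp only [LinearMap.comp_apply, dMap_apply, Int.cast_sum, Int.cast_mul, Finset.mul_sum,
    Finset.sum_mul]
  rw [Finset.sum_comm]
  exact Finset.sum_congr rfl fun a _ => Finset.sum_congr rfl fun b _ => by ring

theorem range_dMap_le_ker_dMap {sgn₁ : A → B → ℤ} {sgn₂ : B → C → ℤ}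
    (hcoc : ∀ a c, ∑ b, sgn₁ a b * sgn₂ b c = 0) :
    LinearMap.range (dMap sgn₁) ≤ LinearMap.ker (dMap sgn₂) := by
  rw [LinearMap.range_le_ker_iff, dMap_comp_dMap]
  refine LinearMap.ext fun f => funext fun c => ?_
  simp [dMap_apply, hcoc]

theorem ip_dMap_eq_ip_deltaMap (hA : ∀ a, μA a ≠ 0) (sgn : A → B → ℤ) (g : A → ℂ) (u : B → ℂ) :
    ip μB (dMap sgn g) u = ip μA g (deltaMap μA μB sgn u) := by
  simp only [ip, dMap_apply, deltaMap_apply, map_sum, map_mul, map_intCast, Complex.conj_ofReal,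
    Finset.mul_sum, Finset.sum_mul]
  rw [Finset.sum_comm]
  refine Finset.sum_congr rfl fun a _ => Finset.sum_congr rfl fun b _ => ?_
  have ha : (μA a : ℂ) ≠ 0 := Complex.ofReal_ne_zero.2 (hA a)
  rw [Complex.ofReal_div]
  field_simp

theorem mem_ker_deltaMap_iff (hA : ∀ a, μA a ≠ 0) {sgn : A → B → ℤ} {u : B → ℂ} :
    u ∈ LinearMap.ker (deltaMap μA μB sgn) ↔
      ∀ f ∈ LinearMap.range (dMap sgn), ip μB f u = 0 := by
  constructor
  · rintro hu _ ⟨g, rfl⟩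
    rw [ip_dMap_eq_ip_deltaMap hA, LinearMap.mem_ker.1 hu]
    simp [ip]
  · refine fun hu => eq_zero_of_forall_ip_eq_zero hA fun g => ?_
    rw [← ip_dMap_eq_ip_deltaMap hA]
    exact hu _ ⟨g, rfl⟩

theorem isCompl_range_dMap_ker_deltaMap (hA : ∀ a, μA a ≠ 0) (hB : ∀ b, 0 < μB b)
    (sgn : A → B → ℤ) :
    IsCompl (LinearMap.range (dMap sgn)) (LinearMap.ker (deltaMap μA μB sgn)) :=
  isCompl_of_mem_iff_forall_inner_eq_zero (ipCore hB) fun _ => mem_ker_deltaMap_iff hA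

end Derivative

theorem harmonic_realizes_cohomology_general
    {A B C : Type*} [Fintype A] [Fintype B] (μA : A → ℝ) (μB : B → ℝ)
    (hA : ∀ a, μA a ≠ 0) (hB : ∀ b, 0 < μB b) (sgn₁ : A → B → ℤ) (sgn₂ : B → C → ℤ)
    (hcoc : ∀ a c, ∑ b, sgn₁ a b * sgn₂ b c = 0) :
    LinearMap.ker (dMap sgn₂) =
        LinearMap.range (dMap sgn₁) ⊔ harmonicForms μA μB sgn₁ sgn₂ ∧
    (∀ g : A → ℂ, ∀ u ∈ harmonicForms μA μB sgn₁ sgn₂, ip μB (dMap sgn₁ g) u = 0) ∧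
    Nonempty
      (↥(harmonicForms μA μB sgn₁ sgn₂) ≃ₗ[ℂ]
        (↥(LinearMap.ker (dMap sgn₂)) ⧸
          Submodule.comap (LinearMap.ker (dMap sgn₂)).subtype (LinearMap.range (dMap sgn₁)))) ∧
    Module.finrank ℂ ↥(harmonicForms μA μB sgn₁ sgn₂) =
      Module.finrank ℂ ↥(LinearMap.ker (dMap sgn₂)) -
        Module.finrank ℂ ↥(LinearMap.range (dMap sgn₁)) := by
  have hcompl := isCompl_range_dMap_ker_deltaMap hA hB sgn₁
  have hle := range_dMap_le_ker_dMap hcoc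
  have hsup : LinearMap.ker (dMap sgn₂) =
      LinearMap.range (dMap sgn₁) ⊔ harmonicForms μA μB sgn₁ sgn₂ := by
    rw [harmonicForms, inf_comm, ← sup_inf_assoc_of_le _ hle, hcompl.sup_eq_top, top_inf_eq]
  have horth : ∀ g : A → ℂ, ∀ u ∈ harmonicForms μA μB sgn₁ sgn₂, ip μB (dMap sgn₁ g) u = 0 :=
    fun g _ hu => (mem_ker_deltaMap_iff hA).1 hu.2 _ ⟨g, rfl⟩
  exact ⟨hsup, horth, ⟨infEquivQuotientOfIsCompl hcompl hle⟩,
    Nat.eq_sub_of_add_eq' (finrank_add_finrank_inf_of_isCompl hcompl hle)⟩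

/-- `ker d_k = range d_{k-1} ⊕ H_k` as an orthogonal direct sum;
consequently the harmonic forms `H_k` realize the deRham cohomology
`ker d_k / range d_{k-1}`, and `dim H_k = dim ker d_k − dim range d_{k-1}`. -/
theorem harmonic_realizes_cohomology
    {Ekm1 Ek Ekp1 : Type*} [Fintype Ekm1] [Fintype Ek] [Fintype Ekp1]
    (μkm1 : Ekm1 → ℝ) (μk : Ek → ℝ) (μkp1 : Ekp1 → ℝ)
    (hμkm1 : ∀ a, 0 < μkm1 a) (hμk : ∀ b, 0 < μk b) (hμkp1 : ∀ c, 0 < μkp1 c)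
    (sgn₁ : Ekm1 → Ek → ℤ) (sgn₂ : Ek → Ekp1 → ℤ)
    (hsgn₁ : ∀ a b, sgn₁ a b = -1 ∨ sgn₁ a b = 0 ∨ sgn₁ a b = 1)
    (hsgn₂ : ∀ b c, sgn₂ b c = -1 ∨ sgn₂ b c = 0 ∨ sgn₂ b c = 1)
    (hcoc : ∀ (a : Ekm1) (c : Ekp1), ∑ b : Ek, sgn₁ a b * sgn₂ b c = 0) :
    LinearMap.ker (dMap sgn₂) =
        LinearMap.range (dMap sgn₁) ⊔
          (LinearMap.ker (dMap sgn₂) ⊓ LinearMap.ker (deltaMap μkm1 μk sgn₁)) ∧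
    (∀ g : Ekm1 → ℂ, ∀ u ∈ LinearMap.ker (dMap sgn₂) ⊓ LinearMap.ker (deltaMap μkm1 μk sgn₁),
        ip μk (dMap sgn₁ g) u = 0) ∧
    Nonempty
      ((↥(LinearMap.ker (dMap sgn₂) ⊓ LinearMap.ker (deltaMap μkm1 μk sgn₁))) ≃ₗ[ℂ]
        (↥(LinearMap.ker (dMap sgn₂)) ⧸
          Submodule.comap (LinearMap.ker (dMap sgn₂)).subtype (LinearMap.range (dMap sgn₁)))) ∧
    Module.finrank ℂ ↥(LinearMap.ker (dMap sgn₂) ⊓ LinearMap.ker (deltaMap μkm1 μk sgn₁)) =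
      Module.finrank ℂ ↥(LinearMap.ker (dMap sgn₂)) -
        Module.finrank ℂ ↥(LinearMap.range (dMap sgn₁)) :=
  harmonic_realizes_cohomology_general μkm1 μk (fun a => (hμkm1 a).ne') hμk sgn₁ sgn₂ hcoc
end

section
/- Let E_{k-2}, E_{k-1}, E_k, E_{k+1} be finite types with positive weights μ_{k-2}, μ_{k-1}, μ_k, μ_{k+1} (all values > 0) and parity functions between each pair of consecutive levels (values in {-1,0,1}), satisfying the cocycle condition ∑ sgn·sgn = 0 on both triples (E_{k-2},E_{k-1},E_k) and (E_{k-1},E_k,E_{k+1}). Let d_j, δ_j be the deRham and dual derivatives. Suppose f : E_{k-1} → ℂ satisfies f = δ_k g for some g : E_k → ℂ, and f is an eigenfunction of the Laplacian on (k-1)-forms: (δ_k ∘ d_{k-1} + d_{k-2} ∘ δ_{k-1}) f = λ f for some λ ∈ ℂ. Then d_{k-1} f is an eigenfunction of the Laplacian on k-forms with the same eigenvalue: (δ_{k+1} ∘ d_k + d_{k-1} ∘ δ_k)(d_{k-1} f) = λ · (d_{k-1} f). -/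
/-- The deRham derivative `d` on graph forms:
`d f (e_{k}) = ∑_{e_{k-1}} sgn(e_{k-1}, e_k) f(e_{k-1})`. -/
noncomputable def dDeriv {A B : Type*} [Fintype A] (sgn : A → B → ℤ) (f : A → ℂ) : B → ℂ :=
  fun b => ∑ a : A, (sgn a b : ℂ) * f a

/-- The dual deRham derivative `δ` on weighted graph forms:
`δ f (e_{k-1}) = ∑_{e_k} (μ_k(e_k)/μ_{k-1}(e_{k-1})) sgn(e_{k-1}, e_k) f(e_k)`. -/
noncomputable def deltaDeriv {A B : Type*} [Fintype B] (μA : A → ℝ) (μB : B → ℝ)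
    (sgn : A → B → ℤ) (f : B → ℂ) : A → ℂ :=
  fun a => ∑ b : B, ((μB b / μA a : ℝ) : ℂ) * (sgn a b : ℂ) * f b

section HodgeLaplacian

variable {R M₀ M₁ M₂ M₃ : Type*} [Semiring R]
  [AddCommMonoid M₀] [AddCommMonoid M₁] [AddCommMonoid M₂] [AddCommMonoid M₃]
  [Module R M₀] [Module R M₁] [Module R M₂] [Module R M₃]

/-- The Hodge Laplacian `δ₁ d₁ + d₀ δ₀` on the middle term of `M₀ ⇄ M₁ ⇄ M₂`; for graph forms this
is the paper's `-Δ`. -/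
def hodgeLaplacian (d₀ : M₀ →ₗ[R] M₁) (δ₀ : M₁ →ₗ[R] M₀) (d₁ : M₁ →ₗ[R] M₂)
    (δ₁ : M₂ →ₗ[R] M₁) : M₁ →ₗ[R] M₁ :=
  δ₁ ∘ₗ d₁ + d₀ ∘ₗ δ₀

variable {d₀ : M₀ →ₗ[R] M₁} {d₁ : M₁ →ₗ[R] M₂} {d₂ : M₂ →ₗ[R] M₃}

theorem comp_hodgeLaplacian_eq_hodgeLaplacian_comp
    (δ₀ : M₁ →ₗ[R] M₀) (δ₁ : M₂ →ₗ[R] M₁) (δ₂ : M₃ →ₗ[R] M₂)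
    (h₁₀ : d₁ ∘ₗ d₀ = 0) (h₂₁ : d₂ ∘ₗ d₁ = 0) :
    d₁ ∘ₗ hodgeLaplacian d₀ δ₀ d₁ δ₁ = hodgeLaplacian d₁ δ₁ d₂ δ₂ ∘ₗ d₁ :=
  calc d₁ ∘ₗ hodgeLaplacian d₀ δ₀ d₁ δ₁
      = d₁ ∘ₗ δ₁ ∘ₗ d₁ := by
        rw [hodgeLaplacian, LinearMap.comp_add, ← LinearMap.comp_assoc δ₀, h₁₀,
          LinearMap.zero_comp, add_zero]
    _ = hodgeLaplacian d₁ δ₁ d₂ δ₂ ∘ₗ d₁ := by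
        rw [hodgeLaplacian, LinearMap.add_comp, LinearMap.comp_assoc d₁ d₂, h₂₁,
          LinearMap.comp_zero, zero_add, LinearMap.comp_assoc]

theorem delta_spectrum_maps_to_d_spectrum_general
    (δ₀ : M₁ →ₗ[R] M₀) (δ₁ : M₂ →ₗ[R] M₁) (δ₂ : M₃ →ₗ[R] M₂)
    (h₁₀ : d₁ ∘ₗ d₀ = 0) (h₂₁ : d₂ ∘ₗ d₁ = 0) {f : M₁} {lam : R}
    (heig : hodgeLaplacian d₀ δ₀ d₁ δ₁ f = lam • f) :
    hodgeLaplacian d₁ δ₁ d₂ δ₂ (d₁ f) = lam • d₁ f :=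
  calc hodgeLaplacian d₁ δ₁ d₂ δ₂ (d₁ f)
      = d₁ (hodgeLaplacian d₀ δ₀ d₁ δ₁ f) :=
        (LinearMap.congr_fun (comp_hodgeLaplacian_eq_hodgeLaplacian_comp δ₀ δ₁ δ₂ h₁₀ h₂₁) f).symm
    _ = lam • d₁ f := by rw [heig, map_smul]

end HodgeLaplacian

section GraphForms

variable {A B C : Type*}

/-- The deRham derivative `dDeriv` as a `ℂ`-linear map. -/
noncomputable def dDerivLinearMap [Fintype A] (sgn : A → B → ℤ) : (A → ℂ) →ₗ[ℂ] (B → ℂ) where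
  toFun := dDeriv sgn
  map_add' f g := by
    funext b
    simp [dDeriv, mul_add, Finset.sum_add_distrib]
  map_smul' z f := by
    funext b
    simp [dDeriv, Finset.mul_sum, mul_left_comm]

/-- The dual deRham derivative `deltaDeriv` as a `ℂ`-linear map. -/
noncomputable def deltaDerivLinearMap [Fintype B] (μA : A → ℝ) (μB : B → ℝ) (sgn : A → B → ℤ) :
    (B → ℂ) →ₗ[ℂ] (A → ℂ) where
  toFun := deltaDeriv μA μB sgn
  map_add' f g := by
    funext a
    simp [deltaDeriv, mul_add, Finset.sum_add_distrib]
  map_smul' z f := by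
    funext a
    simp [deltaDeriv, Finset.mul_sum, mul_left_comm]

theorem dDeriv_eq_vecMul [Fintype A] (sgn : A → B → ℤ) (f : A → ℂ) :
    dDeriv sgn f = Matrix.vecMul f ((Matrix.of sgn).map (Int.castRingHom ℂ)) := by
  funext b
  simp [dDeriv, Matrix.vecMul, dotProduct, mul_comm]

theorem dDerivLinearMap_comp_dDerivLinearMap [Fintype A] [Fintype B]
    {s : A → B → ℤ} {t : B → C → ℤ} (hcoc : ∀ a c, ∑ b, s a b * t b c = 0) :
    dDerivLinearMap t ∘ₗ dDerivLinearMap s = 0 := by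
  have hmul : Matrix.of s * Matrix.of t = 0 := Matrix.ext hcoc
  refine LinearMap.ext fun f => ?_
  change dDeriv t (dDeriv s f) = 0
  rw [dDeriv_eq_vecMul, dDeriv_eq_vecMul, Matrix.vecMul_vecMul, ← Matrix.map_mul, hmul,
    Matrix.map_zero _ (map_zero _), Matrix.vecMul_zero]

end GraphForms

/-- If `f` lies in the range of `δ_k` and is a `λ`-eigenfunction of
the Laplacian on `(k-1)`-forms, then `d_{k-1} f` is a `λ`-eigenfunction of the
Laplacian on `k`-forms. -/
theorem delta_spectrum_maps_to_d_spectrum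
    {Ekm2 Ekm1 Ek Ekp1 : Type*}
    [Fintype Ekm2] [Fintype Ekm1] [Fintype Ek] [Fintype Ekp1]
    (μkm2 : Ekm2 → ℝ) (μkm1 : Ekm1 → ℝ) (μk : Ek → ℝ) (μkp1 : Ekp1 → ℝ)
    (hμkm2 : ∀ a, 0 < μkm2 a) (hμkm1 : ∀ a, 0 < μkm1 a)
    (hμk : ∀ b, 0 < μk b) (hμkp1 : ∀ c, 0 < μkp1 c)
    (sgn₀ : Ekm2 → Ekm1 → ℤ) (sgn₁ : Ekm1 → Ek → ℤ) (sgn₂ : Ek → Ekp1 → ℤ)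
    (hsgn₀ : ∀ a b, sgn₀ a b = -1 ∨ sgn₀ a b = 0 ∨ sgn₀ a b = 1)
    (hsgn₁ : ∀ a b, sgn₁ a b = -1 ∨ sgn₁ a b = 0 ∨ sgn₁ a b = 1)
    (hsgn₂ : ∀ b c, sgn₂ b c = -1 ∨ sgn₂ b c = 0 ∨ sgn₂ b c = 1)
    (hcoc₁ : ∀ (a : Ekm2) (c : Ek), ∑ b : Ekm1, sgn₀ a b * sgn₁ b c = 0)
    (hcoc₂ : ∀ (a : Ekm1) (c : Ekp1), ∑ b : Ek, sgn₁ a b * sgn₂ b c = 0)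
    (f : Ekm1 → ℂ) (g : Ek → ℂ) (hf : f = deltaDeriv μkm1 μk sgn₁ g)
    (lam : ℂ)
    (heig : deltaDeriv μkm1 μk sgn₁ (dDeriv sgn₁ f) +
        dDeriv sgn₀ (deltaDeriv μkm2 μkm1 sgn₀ f) = lam • f) :
    deltaDeriv μk μkp1 sgn₂ (dDeriv sgn₂ (dDeriv sgn₁ f)) +
        dDeriv sgn₁ (deltaDeriv μkm1 μk sgn₁ (dDeriv sgn₁ f)) =
      lam • dDeriv sgn₁ f :=
  delta_spectrum_maps_to_d_spectrum_general
    (deltaDerivLinearMap μkm2 μkm1 sgn₀) (deltaDerivLinearMap μkm1 μk sgn₁)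
    (deltaDerivLinearMap μk μkp1 sgn₂) (dDerivLinearMap_comp_dDerivLinearMap hcoc₁)
    (dDerivLinearMap_comp_dDerivLinearMap hcoc₂) heig
end

section
/- Let E_{k-2}, E_{k-1}, E_k, E_{k+1} be finite types with positive weights μ_{k-2}, μ_{k-1}, μ_k, μ_{k+1} (all values > 0) and parity functions between each pair of consecutive levels (values in {-1,0,1}), satisfying the cocycle condition ∑ sgn·sgn = 0 on both triples (E_{k-2},E_{k-1},E_k) and (E_{k-1},E_k,E_{k+1}). Let d_j, δ_j be the deRham and dual derivatives. Suppose F : E_k → ℂ satisfies F = d_{k-1} g for some g : E_{k-1} → ℂ, and (δ_{k+1} ∘ d_k + d_{k-1} ∘ δ_k) F = λ F for some λ ∈ ℂ. Then δ_k F is an eigenfunction of the Laplacian on (k-1)-forms with the same eigenvalue: (δ_k ∘ d_{k-1} + d_{k-2} ∘ δ_{k-1})(δ_k F) = λ · (δ_k F). -/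
/-!
Since `δ ∘ δ = 0`, both `Δ ∘ δ` and `δ ∘ Δ` equal `δ ∘ d ∘ δ`. So `δ` intertwines the Laplacians of
consecutive degrees and preserves the eigenvalue equation. That `δ ∘ δ = 0` is the cocycle
condition: in the composite of two dual derivatives the weights of the middle level cancel.
-/

section HodgeLaplacian

variable {R M₀ M₁ M₂ M₃ : Type*} [Semiring R]
  [AddCommMonoid M₀] [AddCommMonoid M₁] [AddCommMonoid M₂] [AddCommMonoid M₃]
  [Module R M₀] [Module R M₁] [Module R M₂] [Module R M₃]

variable {δ₀ : M₁ →ₗ[R] M₀} {δ₁ : M₂ →ₗ[R] M₁} {δ₂ : M₃ →ₗ[R] M₂}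

theorem hodgeLaplacian_comp_codifferential
    (d₀ : M₀ →ₗ[R] M₁) (d₁ : M₁ →ₗ[R] M₂) (d₂ : M₂ →ₗ[R] M₃)
    (hδ₀₁ : δ₀ ∘ₗ δ₁ = 0) (hδ₁₂ : δ₁ ∘ₗ δ₂ = 0) :
    hodgeLaplacian d₀ δ₀ d₁ δ₁ ∘ₗ δ₁ = δ₁ ∘ₗ hodgeLaplacian d₁ δ₁ d₂ δ₂ :=
  calc (δ₁ ∘ₗ d₁ + d₀ ∘ₗ δ₀) ∘ₗ δ₁
      = δ₁ ∘ₗ d₁ ∘ₗ δ₁ := by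
        rw [LinearMap.add_comp, LinearMap.comp_assoc, LinearMap.comp_assoc, hδ₀₁,
          LinearMap.comp_zero, add_zero]
    _ = δ₁ ∘ₗ (δ₂ ∘ₗ d₂ + d₁ ∘ₗ δ₁) := by
        rw [LinearMap.comp_add, ← LinearMap.comp_assoc d₂, hδ₁₂, LinearMap.zero_comp, zero_add]

theorem d_spectrum_maps_to_delta_spectrum_general
    (d₀ : M₀ →ₗ[R] M₁) (d₁ : M₁ →ₗ[R] M₂) (d₂ : M₂ →ₗ[R] M₃)
    (hδ₀₁ : δ₀ ∘ₗ δ₁ = 0) (hδ₁₂ : δ₁ ∘ₗ δ₂ = 0) {F : M₂} {lam : R}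
    (heig : hodgeLaplacian d₁ δ₁ d₂ δ₂ F = lam • F) :
    hodgeLaplacian d₀ δ₀ d₁ δ₁ (δ₁ F) = lam • δ₁ F :=
  calc hodgeLaplacian d₀ δ₀ d₁ δ₁ (δ₁ F)
      = δ₁ (hodgeLaplacian d₁ δ₁ d₂ δ₂ F) :=
        LinearMap.congr_fun (hodgeLaplacian_comp_codifferential d₀ d₁ d₂ hδ₀₁ hδ₁₂) F
    _ = lam • δ₁ F := by rw [heig, map_smul]

end HodgeLaplacian

section GraphForms

variable {A B C : Type*}

/-- `dDeriv` as a `ℂ`-linear map, for use in `hodgeLaplacian`. -/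
noncomputable def dDerivₗ [Fintype A] (sgn : A → B → ℤ) : (A → ℂ) →ₗ[ℂ] (B → ℂ) where
  toFun := dDeriv sgn
  map_add' f g := by
    ext b
    simp [dDeriv, mul_add, Finset.sum_add_distrib]
  map_smul' z f := by
    ext b
    simp [dDeriv, Finset.mul_sum, mul_left_comm]

/-- `deltaDeriv` as a `ℂ`-linear map, for use in `hodgeLaplacian`. -/
noncomputable def deltaDerivₗ [Fintype B] (μA : A → ℝ) (μB : B → ℝ) (sgn : A → B → ℤ) :
    (B → ℂ) →ₗ[ℂ] (A → ℂ) where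
  toFun := deltaDeriv μA μB sgn
  map_add' f g := by
    ext a
    simp [deltaDeriv, mul_add, Finset.sum_add_distrib]
  map_smul' z f := by
    ext a
    simp [deltaDeriv, Finset.mul_sum, mul_left_comm]

variable [Fintype B] [Fintype C] {μB : B → ℝ}

theorem deltaDeriv_deltaDeriv (μA : A → ℝ) (hμB : ∀ b, μB b ≠ 0) (μC : C → ℝ)
    (s : A → B → ℤ) (t : B → C → ℤ) (f : C → ℂ) :
    deltaDeriv μA μB s (deltaDeriv μB μC t f) =
      deltaDeriv μA μC (fun a c => ∑ b, s a b * t b c) f := by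
  ext a
  have weight_cancel (b : B) (c : C) :
      ((μB b / μA a : ℝ) : ℂ) * ((μC c / μB b : ℝ) : ℂ) = ((μC c / μA a : ℝ) : ℂ) := by
    rw [← Complex.ofReal_mul, mul_comm, div_mul_div_cancel₀ (hμB b)]
  simp only [deltaDeriv, Finset.mul_sum, Int.cast_sum, Int.cast_mul, Finset.sum_mul]
  rw [Finset.sum_comm]
  refine Finset.sum_congr rfl fun c _ => Finset.sum_congr rfl fun b _ => ?_
  rw [← weight_cancel b c]
  ring

theorem deltaDerivₗ_comp_deltaDerivₗ_eq_zero (μA : A → ℝ) (hμB : ∀ b, μB b ≠ 0) (μC : C → ℝ)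
    {s : A → B → ℤ} {t : B → C → ℤ} (hcoc : ∀ a c, ∑ b, s a b * t b c = 0) :
    deltaDerivₗ μA μB s ∘ₗ deltaDerivₗ μB μC t = 0 := by
  refine LinearMap.ext fun f => (deltaDeriv_deltaDeriv μA hμB μC s t f).trans ?_
  ext a
  simp [deltaDeriv, hcoc]

end GraphForms

/-- If `F` lies in the range of `d_{k-1}` and is a `λ`-eigenfunction
of the Laplacian on `k`-forms, then `δ_k F` is a `λ`-eigenfunction of the Laplacian on
`(k-1)`-forms. -/
theorem d_spectrum_maps_to_delta_spectrum
    {Ekm2 Ekm1 Ek Ekp1 : Type*}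
    [Fintype Ekm2] [Fintype Ekm1] [Fintype Ek] [Fintype Ekp1]
    (μkm2 : Ekm2 → ℝ) (μkm1 : Ekm1 → ℝ) (μk : Ek → ℝ) (μkp1 : Ekp1 → ℝ)
    (hμkm2 : ∀ a, 0 < μkm2 a) (hμkm1 : ∀ a, 0 < μkm1 a)
    (hμk : ∀ b, 0 < μk b) (hμkp1 : ∀ c, 0 < μkp1 c)
    (sgn₀ : Ekm2 → Ekm1 → ℤ) (sgn₁ : Ekm1 → Ek → ℤ) (sgn₂ : Ek → Ekp1 → ℤ)
    (hsgn₀ : ∀ a b, sgn₀ a b = -1 ∨ sgn₀ a b = 0 ∨ sgn₀ a b = 1)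
    (hsgn₁ : ∀ a b, sgn₁ a b = -1 ∨ sgn₁ a b = 0 ∨ sgn₁ a b = 1)
    (hsgn₂ : ∀ b c, sgn₂ b c = -1 ∨ sgn₂ b c = 0 ∨ sgn₂ b c = 1)
    (hcoc₁ : ∀ (a : Ekm2) (c : Ek), ∑ b : Ekm1, sgn₀ a b * sgn₁ b c = 0)
    (hcoc₂ : ∀ (a : Ekm1) (c : Ekp1), ∑ b : Ek, sgn₁ a b * sgn₂ b c = 0)
    (F : Ek → ℂ) (g : Ekm1 → ℂ) (hF : F = dDeriv sgn₁ g)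
    (lam : ℂ)
    (heig : deltaDeriv μk μkp1 sgn₂ (dDeriv sgn₂ F) +
        dDeriv sgn₁ (deltaDeriv μkm1 μk sgn₁ F) = lam • F) :
    deltaDeriv μkm1 μk sgn₁ (dDeriv sgn₁ (deltaDeriv μkm1 μk sgn₁ F)) +
        dDeriv sgn₀ (deltaDeriv μkm2 μkm1 sgn₀ (deltaDeriv μkm1 μk sgn₁ F)) =
      lam • deltaDeriv μkm1 μk sgn₁ F :=
  d_spectrum_maps_to_delta_spectrum_general (dDerivₗ sgn₀) (dDerivₗ sgn₁) (dDerivₗ sgn₂)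
    (deltaDerivₗ_comp_deltaDerivₗ_eq_zero μkm2 (fun b => (hμkm1 b).ne') μk hcoc₁)
    (deltaDerivₗ_comp_deltaDerivₗ_eq_zero μkm1 (fun b => (hμk b).ne') μkp1 hcoc₂) heig
end

section
/- Let f : ℝ → ℝ satisfy the harmonic extension recurrence on dyadic points: for every integer m ≥ 1 and every even integer j with 0 ≤ j ≤ 2^m − 2, f((2j+1)/2^{m+1}) = (8/25)·f(j/2^m) + (4/5)·f((j+1)/2^m) − (3/25)·f((j+2)/2^m) and f((2j+3)/2^{m+1}) = (8/25)·f((j+2)/2^m) + (4/5)·f((j+1)/2^m) − (3/25)·f(j/2^m). Then for every integer m ≥ 1, ∑_{j=0}^{2^m − 1} |2·f((2j+1)/2^{m+1}) − f(j/2^m) − f((j+1)/2^m)| ≥ (3/25)·|f(1) − f(0)|. -/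
/-!
Only the antisymmetric part of the extension rule matters. If the midpoints of two adjacent
intervals with endpoint values `a, b, c` get the values `αa + βb - γc` and `αc + βb - γa`, then the
defects `2 * midpoint - left - right` of the two intervals differ by `(1 - 2(α + γ))(c - a)`,
whatever `b` and `β` are. Hence their norms sum to at least `‖1 - 2(α + γ)‖ ‖c - a‖`, and these
bounds telescope over consecutive pairs of intervals. For `α = 8/25` and `γ = 3/25` the factor is
`3/25`.
-/

theorem sum_range_two_mul {M : Type*} [AddCommMonoid M] (g : ℕ → M) (n : ℕ) :
    ∑ j ∈ Finset.range (2 * n), g j = ∑ k ∈ Finset.range n, (g (2 * k) + g (2 * k + 1)) := by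
  induction n with
  | zero => rfl
  | succ n ih =>
    rw [Nat.mul_succ, Finset.sum_range_succ, Finset.sum_range_succ, ih, Finset.sum_range_succ,
      add_assoc]

section

variable {𝕜 E : Type*} [NormedField 𝕜] [SeminormedAddCommGroup E] [NormedSpace 𝕜 E] (α β γ : 𝕜)

theorem mul_norm_sub_le_norm_midpoint_defect_add (a b c : E) :
    ‖1 - 2 * (α + γ)‖ * ‖c - a‖ ≤
      ‖(2 : 𝕜) • (α • a + β • b - γ • c) - a - b‖ +
        ‖(2 : 𝕜) • (α • c + β • b - γ • a) - b - c‖ := by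
  have defect_sub : (1 - 2 * (α + γ)) • (c - a) =
      ((2 : 𝕜) • (α • a + β • b - γ • c) - a - b) -
        ((2 : 𝕜) • (α • c + β • b - γ • a) - b - c) := by
    module
  rw [← norm_smul, defect_sub]
  exact norm_sub_le _ _

theorem mul_norm_sub_le_sum_norm_midpoint_defect {u v : ℕ → E} {n : ℕ}
    (hv : ∀ k < n,
      v (2 * k) = α • u (2 * k) + β • u (2 * k + 1) - γ • u (2 * k + 2) ∧
        v (2 * k + 1) = α • u (2 * k + 2) + β • u (2 * k + 1) - γ • u (2 * k)) :
    ‖1 - 2 * (α + γ)‖ * ‖u (2 * n) - u 0‖ ≤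
      ∑ j ∈ Finset.range (2 * n), ‖(2 : 𝕜) • v j - u j - u (j + 1)‖ := by
  calc ‖1 - 2 * (α + γ)‖ * ‖u (2 * n) - u 0‖
      ≤ ‖1 - 2 * (α + γ)‖ * ∑ k ∈ Finset.range n, ‖u (2 * k + 2) - u (2 * k)‖ := by
        gcongr
        simpa only [dist_eq_norm_sub', Nat.mul_succ, mul_zero] using
          dist_le_range_sum_dist (fun k ↦ u (2 * k)) n
    _ = ∑ k ∈ Finset.range n, ‖1 - 2 * (α + γ)‖ * ‖u (2 * k + 2) - u (2 * k)‖ :=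
        Finset.mul_sum ..
    _ ≤ ∑ k ∈ Finset.range n,
          (‖(2 : 𝕜) • v (2 * k) - u (2 * k) - u (2 * k + 1)‖ +
            ‖(2 : 𝕜) • v (2 * k + 1) - u (2 * k + 1) - u (2 * k + 2)‖) := by
        gcongr with k hk
        obtain ⟨hleft, hright⟩ := hv k (Finset.mem_range.mp hk)
        rw [hleft, hright]
        exact mul_norm_sub_le_norm_midpoint_defect_add α β γ _ _ _
    _ = ∑ j ∈ Finset.range (2 * n), ‖(2 : 𝕜) • v j - u j - u (j + 1)‖ :=
        (sum_range_two_mul (fun j ↦ ‖(2 : 𝕜) • v j - u j - u (j + 1)‖) n).symm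

theorem dyadic_approximation_lower_bound_general (f : ℝ → E) {m : ℕ} (hm : 1 ≤ m)
    (hrec : ∀ j : ℕ, Even j → j ≤ 2 ^ m - 2 →
      f ((2 * (j : ℝ) + 1) / 2 ^ (m + 1)) =
          α • f ((j : ℝ) / 2 ^ m) + β • f (((j : ℝ) + 1) / 2 ^ m)
            - γ • f (((j : ℝ) + 2) / 2 ^ m) ∧
        f ((2 * (j : ℝ) + 3) / 2 ^ (m + 1)) =
          α • f (((j : ℝ) + 2) / 2 ^ m) + β • f (((j : ℝ) + 1) / 2 ^ m)
            - γ • f ((j : ℝ) / 2 ^ m)) :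
    ‖1 - 2 * (α + γ)‖ * ‖f 1 - f 0‖ ≤
      ∑ j ∈ Finset.range (2 ^ m),
        ‖(2 : 𝕜) • f ((2 * (j : ℝ) + 1) / 2 ^ (m + 1)) - f ((j : ℝ) / 2 ^ m)
          - f (((j : ℝ) + 1) / 2 ^ m)‖ := by
  have two_mul_pairs : 2 * 2 ^ (m - 1) = 2 ^ m := mul_pow_sub_one (by lia) 2
  let u (j : ℕ) : E := f (j / 2 ^ m)
  let v (j : ℕ) : E := f ((2 * j + 1) / 2 ^ (m + 1))
  have hv (k : ℕ) (hk : k < 2 ^ (m - 1)) :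
      v (2 * k) = α • u (2 * k) + β • u (2 * k + 1) - γ • u (2 * k + 2) ∧
        v (2 * k + 1) = α • u (2 * k + 2) + β • u (2 * k + 1) - γ • u (2 * k) := by
    have right_midpoint : 2 * (2 * (k : ℝ) + 1) + 1 = 2 * (2 * k) + 3 := by ring
    simpa [u, v, right_midpoint] using hrec (2 * k) (even_two_mul k) (by lia)
  simpa [u, v, two_mul_pairs] using mul_norm_sub_le_sum_norm_midpoint_defect α β γ hv

end

/-- For a function satisfying the harmonic extension recurrence on
dyadic points, the `L¹`-distance between consecutive dyadic approximations of the
increment measure is bounded below by `(3/25)·|f(1) − f(0)|`. -/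
theorem dyadic_approximation_lower_bound
    (f : ℝ → ℝ)
    (hrec : ∀ m : ℕ, 1 ≤ m → ∀ j : ℕ, Even j → j ≤ 2 ^ m - 2 →
      f ((2 * (j : ℝ) + 1) / 2 ^ (m + 1)) =
          (8 / 25) * f ((j : ℝ) / 2 ^ m) + (4 / 5) * f (((j : ℝ) + 1) / 2 ^ m)
            - (3 / 25) * f (((j : ℝ) + 2) / 2 ^ m) ∧
        f ((2 * (j : ℝ) + 3) / 2 ^ (m + 1)) =
          (8 / 25) * f (((j : ℝ) + 2) / 2 ^ m) + (4 / 5) * f (((j : ℝ) + 1) / 2 ^ m)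
            - (3 / 25) * f ((j : ℝ) / 2 ^ m))
    (m : ℕ) (hm : 1 ≤ m) :
    (3 / 25) * |f 1 - f 0| ≤
      ∑ j ∈ Finset.range (2 ^ m),
        |2 * f ((2 * (j : ℝ) + 1) / 2 ^ (m + 1)) - f ((j : ℝ) / 2 ^ m)
          - f (((j : ℝ) + 1) / 2 ^ m)| := by
  simpa [show (1 : ℝ) - 2 * (8 / 25 + 3 / 25) = 3 / 25 by norm_num] using
    dyadic_approximation_lower_bound_general (8 / 25 : ℝ) (4 / 5) (3 / 25) f hm (hrec m hm)
end
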